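/- arXiv:1908.06389 — 5 statements merged into one kernel-verified Lean document; each statement's English description precedes it below -/
import Mathlib

section
/- Let a > 0 and b > 0. Then ∫_0^∞ ln(a + b·t) · e^{−t} dt = ln a + e^{a/b} · E₁(a/b), where E₁(x) = ∫_x^∞ e^{−u}/u du is the exponential integral. -/
/-!
The identity is an integration by parts on `(0, ∞)` of the factors `log (a + b t)` and `-e^{-t}`.
The boundary terms contribute `log a`, and the remaining integral `∫ b / (a + b t) e^{-t} dt`
becomes `e^{a/b} E₁(a/b)` under the translation `u = t + a/b`. Integrability and the vanishing of
the boundary term at infinity both follow from the linear bound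
`|log (a + b t)| ≤ |log a| + (b / a) t` on `t ≥ 0`.
-/

open MeasureTheory Real

/-- The exponential integral `E₁(x) = ∫_x^∞ e^{-u}/u du`. -/
noncomputable def expIntegralE1 (x : ℝ) : ℝ :=
  ∫ u in Set.Ioi x, Real.exp (-u) / u

lemma abs_log_affine_le {a b t : ℝ} (ha : 0 < a) (hb : 0 < b) (ht : 0 ≤ t) :
    |Real.log (a + b * t)| ≤ |Real.log a| + b / a * t := by
  have h1 : 0 < 1 + b / a * t := by positivity
  have h2 : a + b * t = a * (1 + b / a * t) := by field_simp
  rw [h2, Real.log_mul ha.ne' h1.ne']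
  have h3 : 0 ≤ Real.log (1 + b / a * t) :=
    Real.log_nonneg (le_add_of_nonneg_right (by positivity))
  have h4 := Real.log_le_sub_one_of_pos h1
  calc _ ≤ |Real.log a| + |Real.log (1 + b / a * t)| := abs_add_le _ _
    _ ≤ _ := by rw [abs_of_nonneg h3]; linarith

lemma integrableOn_log_affine_mul_exp_neg {a b : ℝ} (ha : 0 < a) (hb : 0 < b) :
    IntegrableOn (fun t => Real.log (a + b * t) * Real.exp (-t)) (Set.Ioi 0) := by
  have h0 : IntegrableOn (fun t : ℝ => Real.exp (-t)) (Set.Ioi 0) := integrableOn_exp_neg_Ioi 0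
  have h1 : IntegrableOn (fun t : ℝ => Real.exp (-t) * t) (Set.Ioi 0) := by
    have h := Real.GammaIntegral_convergent (s := 2) (by norm_num)
    norm_num at h
    exact h
  refine ((h0.const_mul |Real.log a|).add (h1.const_mul (b / a))).mono' ?_ ?_
  · exact Measurable.aestronglyMeasurable (by fun_prop)
  · filter_upwards [ae_restrict_mem measurableSet_Ioi] with t ht
    have h := mul_le_mul_of_nonneg_right (abs_log_affine_le ha hb (le_of_lt ht))
      (Real.exp_pos (-t)).le
    simp only [norm_mul, Real.norm_eq_abs, Real.abs_exp, Pi.add_apply]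
    linarith

lemma integrableOn_div_affine_mul_exp_neg {a b : ℝ} (ha : 0 < a) (hb : 0 < b) :
    IntegrableOn (fun t => b / (a + b * t) * (-Real.exp (-t))) (Set.Ioi 0) := by
  have h0 : IntegrableOn (fun t : ℝ => Real.exp (-t)) (Set.Ioi 0) := integrableOn_exp_neg_Ioi 0
  refine (h0.const_mul (b / a)).mono' ?_ ?_
  · exact Measurable.aestronglyMeasurable (by fun_prop)
  · filter_upwards [ae_restrict_mem measurableSet_Ioi] with t ht
    have ht' : 0 < t := ht
    have h : 0 < a + b * t := by positivity
    simp only [norm_mul, norm_neg, Real.norm_eq_abs, Real.abs_exp]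
    rw [abs_of_pos (by positivity)]
    gcongr
    nlinarith [mul_pos hb ht']

lemma tendsto_log_affine_mul_exp_neg {a b : ℝ} (ha : 0 < a) (hb : 0 < b) :
    Filter.Tendsto (fun t => Real.log (a + b * t) * (-Real.exp (-t))) Filter.atTop (nhds 0) := by
  have h0 : Filter.Tendsto (fun t : ℝ => Real.exp (-t)) Filter.atTop (nhds 0) :=
    Real.tendsto_exp_neg_atTop_nhds_zero
  have h1 : Filter.Tendsto (fun t : ℝ => t * Real.exp (-t)) Filter.atTop (nhds 0) := by
    simpa using Real.tendsto_pow_mul_exp_neg_atTop_nhds_zero 1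
  have h2 := (h0.const_mul |Real.log a|).add (h1.const_mul (b / a))
  simp only [mul_zero, add_zero] at h2
  refine squeeze_zero_norm' ?_ h2
  filter_upwards [Filter.eventually_ge_atTop 0] with t ht
  have h := mul_le_mul_of_nonneg_right (abs_log_affine_le ha hb ht) (Real.exp_pos (-t)).le
  simp only [norm_mul, norm_neg, Real.norm_eq_abs, Real.abs_exp]
  linarith

/-- The translation `u = t + x` in the integral defining `E₁(x)`. -/
lemma exp_mul_expIntegralE1 (x : ℝ) :
    Real.exp x * expIntegralE1 x = ∫ t in Set.Ioi (0 : ℝ), Real.exp (-t) / (t + x) := by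
  have h := (measurePreserving_add_right volume x).setIntegral_preimage_emb
    (measurableEmbedding_addRight x) (fun u => Real.exp (-u) / u) (Set.Ioi x)
  simp only [Set.preimage_add_const_Ioi, sub_self] at h
  rw [expIntegralE1, ← h, ← integral_const_mul]
  congr 1 with t
  rw [mul_div_assoc', ← Real.exp_add]
  ring_nf

/-- Expectation of the logarithm of an affine function of a standard
exponential random variable:
`∫_0^∞ ln(a + bt) e^{-t} dt = ln a + e^{a/b} E₁(a/b)` for `a, b > 0`. -/
theorem integral_log_affine_exp (a b : ℝ) (ha : 0 < a) (hb : 0 < b) :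
    ∫ t in Set.Ioi (0 : ℝ), Real.log (a + b * t) * Real.exp (-t)
      = Real.log a + Real.exp (a / b) * expIntegralE1 (a / b) := by
  have hu : ∀ t ∈ Set.Ici (0 : ℝ),
      HasDerivAt (fun t => Real.log (a + b * t)) (b / (a + b * t)) t := by
    intro t ht
    have ht' : 0 ≤ t := ht
    have h : HasDerivAt (fun t => a + b * t) b t := by
      simpa using ((hasDerivAt_id t).const_mul b).const_add a
    exact h.log (by positivity)
  have hv : ∀ t : ℝ, HasDerivAt (fun t => -Real.exp (-t)) (Real.exp (-t)) t := by
    intro t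
    simpa using (hasDerivAt_neg t).exp.fun_neg
  have h_zero : Filter.Tendsto (fun t => Real.log (a + b * t) * (-Real.exp (-t)))
      (nhdsWithin 0 (Set.Ioi 0)) (nhds (-Real.log a)) := by
    have h := ((hu 0 Set.self_mem_Ici).mul (hv 0)).continuousAt.tendsto
    have h' := h.mono_left (nhdsWithin_le_nhds (s := Set.Ioi 0))
    simpa [Pi.mul_def] using h'
  rw [integral_Ioi_mul_deriv_eq_deriv_mul (fun t ht => hu t (Set.Ioi_subset_Ici_self ht)) (fun t _ => hv t)
    (integrableOn_log_affine_mul_exp_neg ha hb) (integrableOn_div_affine_mul_exp_neg ha hb)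
    h_zero (tendsto_log_affine_mul_exp_neg ha hb), exp_mul_expIntegralE1, zero_sub, neg_neg,
    sub_eq_add_neg, ← integral_neg]
  congr 1
  refine setIntegral_congr_fun measurableSet_Ioi fun t ht => ?_
  have ht' : 0 < t := ht
  have h1 : a + b * t ≠ 0 := by positivity
  have h2 : t + a / b ≠ 0 := by positivity
  have h3 : t + a / b = (a + b * t) / b := by field_simp; ring
  simp only [h3]
  field_simp
end

section
/- Fix ρ ∈ (0,1), h > 0, σ_A > 0, σ_cov > 0, σ_rec > 0. For P > 0 define F(P) = log₂( ρ(P h² + σ_A²) / (ρ σ_A² + σ_cov²) ) + (1/(2 ln 2)) · [ e^{u(P)} E₁(u(P)) − e^{v(P)} E₁(v(P)) ], where u(P) = ρ σ_rec² / ( 2(1−ρ)² σ_cov² (P h² + σ_A²) ), v(P) = (ρ σ_A² + σ_cov²) σ_rec² / ( 2(1−ρ)² P h² σ_A² σ_cov² ), and E₁(x) = ∫_x^∞ e^{−u}/u du. Then lim_{P → ∞} [ F(P) − log₂( P h² / ( √(σ_A² + σ_cov²/ρ) · √(σ_A²) ) ) ] = 0. -/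
/-!
As `x → 0⁺`, the exponential integral has only a logarithmic singularity: since
`1/t - e^{-t}/t ∈ [0, 1]` for `t > 0`, one has `|E₁(x) - E₁(y) - log (y/x)| ≤ |y - x|`
(`abs_expIntegralE1_sub_sub_log_le`). Moreover `(eˣ - 1) E₁(x) → 0`, because `x log x → 0`
(`tendsto_exp_sub_one_mul_expIntegralE1`). Hence if `u, v → 0⁺` and `v/u → K > 0`, then
`eᵘ E₁(u) - eᵛ E₁(v) → log K` (`tendsto_exp_mul_expIntegralE1_sub`).

In the theorem, `v/u → K = (ρ σ_A² + σ_cov²) / (ρ σ_A²)`, while the quotient of the arguments of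
the two base-2 logarithms tends to `1/√K`; the contributions `-log K / (2 log 2)` and
`log K / (2 log 2)` cancel.
-/

open MeasureTheory Real Filter

lemma integrableOn_exp_neg_div {x : ℝ} (hx : 0 < x) :
    IntegrableOn (fun u : ℝ => Real.exp (-u) / u) (Set.Ioi x) := by
  refine Integrable.mono' ((integrableOn_exp_neg_Ioi x).const_mul x⁻¹) ?_ ?_
  · exact (by fun_prop : Measurable fun u : ℝ => Real.exp (-u) / u).aestronglyMeasurable
  · filter_upwards [ae_restrict_mem measurableSet_Ioi] with u hu
    have hxu : x < u := hu
    have hu0 : 0 < u := hx.trans hxu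
    rw [Real.norm_of_nonneg (by positivity), div_eq_inv_mul]
    gcongr

lemma abs_expIntegralE1_sub_sub_log_le {x y : ℝ} (hx : 0 < x) (hy : 0 < y) :
    |expIntegralE1 x - expIntegralE1 y - (Real.log y - Real.log x)| ≤ |y - x| := by
  have hpos : ∀ t ∈ Set.uIcc x y, 0 < t := fun t ht => (lt_min hx hy).trans_le ht.1
  have h1 : expIntegralE1 x - expIntegralE1 y = ∫ t in x..y, Real.exp (-t) / t :=
    (intervalIntegral.integral_Ioi_sub_Ioi' (integrableOn_exp_neg_div hx)
      (integrableOn_exp_neg_div hy))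
  have h2 : Real.log y - Real.log x = ∫ t in x..y, t⁻¹ := by
    rw [integral_inv_of_pos hx hy, Real.log_div hy.ne' hx.ne']
  have i1 : IntervalIntegrable (fun t : ℝ => Real.exp (-t) / t) volume x y :=
    ContinuousOn.intervalIntegrable
      (ContinuousOn.div (by fun_prop) (by fun_prop) fun t ht => (hpos t ht).ne')
  have i2 : IntervalIntegrable (fun t : ℝ => t⁻¹) volume x y :=
    ContinuousOn.intervalIntegrable
      (ContinuousOn.inv₀ (by fun_prop) fun t ht => (hpos t ht).ne')
  rw [h1, h2, ← intervalIntegral.integral_sub i1 i2, ← Real.norm_eq_abs]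
  refine (intervalIntegral.norm_integral_le_of_norm_le_const (C := 1) fun t ht => ?_).trans
    (by rw [one_mul])
  have ht0 := hpos t (Set.uIoc_subset_uIcc ht)
  have e1 : Real.exp (-t) ≤ 1 := Real.exp_le_one_iff.2 (by linarith)
  have e2 : -t + 1 ≤ Real.exp (-t) := Real.add_one_le_exp _
  rw [inv_eq_one_div, ← sub_div, Real.norm_eq_abs, abs_div, abs_of_pos ht0, div_le_one ht0,
    abs_le]
  constructor <;> linarith

lemma tendsto_exp_sub_one_mul_expIntegralE1 :
    Tendsto (fun x : ℝ => (Real.exp x - 1) * expIntegralE1 x) (nhdsWithin 0 (Set.Ioi 0))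
      (nhds 0) := by
  have hlog : Tendsto (fun x : ℝ => Real.log x * x) (nhdsWithin 0 (Set.Ioi 0)) (nhds 0) := by
    simpa using tendsto_log_mul_rpow_nhdsGT_zero one_pos
  have hid : Tendsto (fun x : ℝ => x) (nhdsWithin 0 (Set.Ioi 0)) (nhds 0) :=
    tendsto_id.mono_left nhdsWithin_le_nhds
  have hb : Tendsto (fun x : ℝ => 2 * (x * (|expIntegralE1 1| + 1) + |Real.log x * x|))
      (nhdsWithin 0 (Set.Ioi 0)) (nhds 0) := by
    simpa using ((hid.mul_const (|expIntegralE1 1| + 1)).add hlog.abs).const_mul 2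
  refine squeeze_zero_norm' ?_ hb
  filter_upwards [Ioo_mem_nhdsGT (zero_lt_one' ℝ)] with x hx
  obtain ⟨hx0, hx1⟩ := hx
  have h1 : |Real.exp x - 1| ≤ 2 * |x| :=
    Real.abs_exp_sub_one_le (by rw [abs_of_pos hx0]; exact hx1.le)
  have h2 := abs_expIntegralE1_sub_sub_log_le hx0 one_pos
  rw [Real.log_one, zero_sub, abs_of_pos (sub_pos.2 hx1)] at h2
  have h3 : |expIntegralE1 x| ≤ |expIntegralE1 1| + 1 + |Real.log x| := by
    have := abs_le.1 h2
    rw [abs_le]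
    constructor <;>
      linarith [neg_abs_le (expIntegralE1 1), le_abs_self (expIntegralE1 1),
        neg_abs_le (Real.log x), le_abs_self (Real.log x)]
  rw [abs_of_pos hx0] at h1
  rw [Real.norm_eq_abs, abs_mul, abs_mul, abs_of_pos hx0]
  calc |Real.exp x - 1| * |expIntegralE1 x|
      ≤ (2 * x) * (|expIntegralE1 1| + 1 + |Real.log x|) := by gcongr
    _ = _ := by ring

lemma tendsto_exp_mul_expIntegralE1_sub {u v : ℝ → ℝ} {K : ℝ} (hK : 0 < K)
    (hu : Tendsto u atTop (nhdsWithin 0 (Set.Ioi 0)))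
    (hv : Tendsto v atTop (nhdsWithin 0 (Set.Ioi 0)))
    (huv : Tendsto (fun P => v P / u P) atTop (nhds K)) :
    Tendsto (fun P => Real.exp (u P) * expIntegralE1 (u P)
      - Real.exp (v P) * expIntegralE1 (v P)) atTop (nhds (Real.log K)) := by
  have hu0 := hu.mono_right nhdsWithin_le_nhds
  have hv0 := hv.mono_right nhdsWithin_le_nhds
  have hup : ∀ᶠ P in atTop, 0 < u P := hu.eventually self_mem_nhdsWithin
  have hvp : ∀ᶠ P in atTop, 0 < v P := hv.eventually self_mem_nhdsWithin
  have hd : Tendsto (fun P => expIntegralE1 (u P) - expIntegralE1 (v P)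
      - (Real.log (v P) - Real.log (u P))) atTop (nhds 0) := by
    refine squeeze_zero_norm' (a := fun P => |v P - u P|) ?_ (by simpa using (hv0.sub hu0).abs)
    filter_upwards [hup, hvp] with P h1 h2
    exact abs_expIntegralE1_sub_sub_log_le h1 h2
  have hs := ((tendsto_exp_sub_one_mul_expIntegralE1.comp hu).sub
    (tendsto_exp_sub_one_mul_expIntegralE1.comp hv)).add (hd.add (huv.log hK.ne'))
  rw [sub_zero, zero_add, zero_add] at hs
  refine hs.congr' ?_
  filter_upwards [hup, hvp] with P h1 h2
  simp only [Function.comp]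
  rw [Real.log_div h2.ne' h1.ne']
  ring

/-- The closed-form high-SNR approximation `F(P)` of the mutual information of
the splitting receiver (Proposition 1) approaches its asymptotic simplification
`log₂(Ph² / (√(σ_A² + σ_cov²/ρ) · √(σ_A²)))` as `P → ∞`. -/
theorem splitting_receiver_mi_asymptotics
    (ρ h σA σcov σrec : ℝ) (hρ : ρ ∈ Set.Ioo (0 : ℝ) 1)
    (hh : 0 < h) (hσA : 0 < σA) (hσcov : 0 < σcov) (hσrec : 0 < σrec) :
    Tendsto (fun P : ℝ =>
        (Real.logb 2 (ρ * (P * h ^ 2 + σA ^ 2) / (ρ * σA ^ 2 + σcov ^ 2))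
          + (1 / (2 * Real.log 2)) *
            (Real.exp (ρ * σrec ^ 2 / (2 * (1 - ρ) ^ 2 * σcov ^ 2 * (P * h ^ 2 + σA ^ 2)))
                * expIntegralE1
                  (ρ * σrec ^ 2 / (2 * (1 - ρ) ^ 2 * σcov ^ 2 * (P * h ^ 2 + σA ^ 2)))
              - Real.exp ((ρ * σA ^ 2 + σcov ^ 2) * σrec ^ 2
                    / (2 * (1 - ρ) ^ 2 * P * h ^ 2 * σA ^ 2 * σcov ^ 2))
                * expIntegralE1 ((ρ * σA ^ 2 + σcov ^ 2) * σrec ^ 2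
                    / (2 * (1 - ρ) ^ 2 * P * h ^ 2 * σA ^ 2 * σcov ^ 2))))
        - Real.logb 2 (P * h ^ 2
            / (Real.sqrt (σA ^ 2 + σcov ^ 2 / ρ) * Real.sqrt (σA ^ 2))))
      atTop (nhds 0) := by
  obtain ⟨hρ0, hρ1⟩ := hρ
  have hρ' : 0 < 1 - ρ := sub_pos.2 hρ1
  have hl2 : 0 < Real.log 2 := Real.log_pos one_lt_two
  set K : ℝ := (ρ * σA ^ 2 + σcov ^ 2) / (ρ * σA ^ 2) with hKdef
  have hK : 0 < K := by positivity
  have hS : Real.sqrt (σA ^ 2 + σcov ^ 2 / ρ) = Real.sqrt K * σA := by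
    rw [show σA ^ 2 + σcov ^ 2 / ρ = K * σA ^ 2 by rw [hKdef]; field_simp,
      Real.sqrt_mul hK.le, Real.sqrt_sq hσA.le]
  have hSA : Real.sqrt (σA ^ 2) = σA := Real.sqrt_sq hσA.le
  have hlin : Tendsto (fun P : ℝ => P * h ^ 2) atTop atTop :=
    tendsto_id.atTop_mul_const (by positivity)
  have hlin' : Tendsto (fun P : ℝ => P * h ^ 2 + σA ^ 2) atTop atTop :=
    tendsto_atTop_add_const_right _ _ hlin
  -- the common correction factor `(P h² + σ_A²) / (P h²)`
  have hr : Tendsto (fun P : ℝ => 1 + σA ^ 2 / (P * h ^ 2)) atTop (nhds 1) := by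
    simpa using (hlin.const_div_atTop (σA ^ 2)).const_add 1
  have hu : Tendsto (fun P : ℝ =>
      ρ * σrec ^ 2 / (2 * (1 - ρ) ^ 2 * σcov ^ 2 * (P * h ^ 2 + σA ^ 2))) atTop
      (nhdsWithin 0 (Set.Ioi 0)) := by
    refine tendsto_nhdsWithin_iff.2
      ⟨(hlin'.const_mul_atTop (by positivity)).const_div_atTop _, ?_⟩
    filter_upwards [eventually_gt_atTop 0] with P hP
    exact Set.mem_Ioi.2 (by positivity)
  have hv : Tendsto (fun P : ℝ => (ρ * σA ^ 2 + σcov ^ 2) * σrec ^ 2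
      / (2 * (1 - ρ) ^ 2 * P * h ^ 2 * σA ^ 2 * σcov ^ 2)) atTop
      (nhdsWithin 0 (Set.Ioi 0)) := by
    refine tendsto_nhdsWithin_iff.2 ⟨Tendsto.const_div_atTop ?_ _, ?_⟩
    · refine (hlin.const_mul_atTop
        (show 0 < 2 * (1 - ρ) ^ 2 * σA ^ 2 * σcov ^ 2 by positivity)).congr fun P => ?_
      ring
    filter_upwards [eventually_gt_atTop 0] with P hP
    exact Set.mem_Ioi.2 (by positivity)
  have huv := tendsto_exp_mul_expIntegralE1_sub hK hu hv (by
    have := hr.const_mul K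
    rw [mul_one] at this
    refine this.congr' ?_
    filter_upwards [eventually_gt_atTop 0] with P hP
    rw [hKdef]
    field_simp)
  have hlog : Tendsto (fun P : ℝ => Real.log ((Real.sqrt K)⁻¹ * (1 + σA ^ 2 / (P * h ^ 2)))
      / Real.log 2) atTop (nhds (Real.log ((Real.sqrt K)⁻¹) / Real.log 2)) := by
    have := hr.const_mul (Real.sqrt K)⁻¹
    rw [mul_one] at this
    exact (this.log (by positivity)).div_const _
  have hs := hlog.add (huv.const_mul (1 / (2 * Real.log 2)))
  have hz : Real.log ((Real.sqrt K)⁻¹) / Real.log 2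
      + 1 / (2 * Real.log 2) * Real.log K = 0 := by
    rw [Real.log_inv, Real.log_sqrt hK.le]
    field_simp
    ring
  rw [hz] at hs
  refine hs.congr' ?_
  filter_upwards [eventually_gt_atTop 0] with P hP
  have hsK : 0 < Real.sqrt K := Real.sqrt_pos.2 hK
  have hsq : Real.sqrt K * Real.sqrt K * (ρ * σA ^ 2) = ρ * σA ^ 2 + σcov ^ 2 := by
    rw [Real.mul_self_sqrt hK.le, hKdef]
    field_simp
  have hquot : (Real.sqrt K)⁻¹ * (1 + σA ^ 2 / (P * h ^ 2))
      = ρ * (P * h ^ 2 + σA ^ 2) / (ρ * σA ^ 2 + σcov ^ 2)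
        / (P * h ^ 2 / (Real.sqrt (σA ^ 2 + σcov ^ 2 / ρ) * Real.sqrt (σA ^ 2))) := by
    rw [hS, hSA, ← hsq]
    field_simp
  rw [hquot, Real.log_div (by positivity) (by positivity), Real.logb, Real.logb]
  ring
end

section
/- Let h > 0, σ_A > 0, σ_cov > 0. Then lim_{P → ∞} [ log₂( P h² / ( √(σ_A² + σ_cov²) · √(σ_A²) ) ) − log₂( 1 + P h² / (σ_A² + σ_cov²) ) ] = (1/2) · log₂( 1 + σ_cov² / σ_A² ). -/
/-!
Put `S = σA² + σcov²`. For `P > 0` the quotient of the two arguments of `log₂` factors as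
`(√S / σA) · (1 + (S / h²) / P)⁻¹`. The first factor is independent of `P` and its square is
`1 + σcov² / σA²`; the second tends to `1`, so its logarithm vanishes as `P → ∞`.
-/

open Real Filter

/-- Asymptotic mutual information gain of the splitting receiver (Proposition 2):
the difference between the supremum of the asymptotic splitting-receiver mutual
information and the coherent receiver's mutual information tends to
`(1/2)·log₂(1 + σ_cov²/σ_A²)` as `P → ∞`. -/
theorem asymptotic_mi_gain (h σA σcov : ℝ) (hh : 0 < h) (hσA : 0 < σA) (hσcov : 0 < σcov) :
    Tendsto (fun P : ℝ =>
        Real.logb 2 (P * h ^ 2 / (Real.sqrt (σA ^ 2 + σcov ^ 2) * Real.sqrt (σA ^ 2)))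
          - Real.logb 2 (1 + P * h ^ 2 / (σA ^ 2 + σcov ^ 2)))
      atTop (nhds ((1 / 2) * Real.logb 2 (1 + σcov ^ 2 / σA ^ 2))) := by
  have hS : 0 < σA ^ 2 + σcov ^ 2 := by positivity
  have hL : (1 / 2) * Real.logb 2 (1 + σcov ^ 2 / σA ^ 2)
      = Real.logb 2 (Real.sqrt (σA ^ 2 + σcov ^ 2) / σA) := by
    have e : 1 + σcov ^ 2 / σA ^ 2 = (Real.sqrt (σA ^ 2 + σcov ^ 2) / σA) ^ 2 := by
      rw [div_pow, Real.sq_sqrt hS.le]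
      field_simp
    rw [e, Real.logb_pow]
    push_cast
    ring
  rw [hL, Real.sqrt_sq hσA.le]
  generalize σA ^ 2 + σcov ^ 2 = S at hS ⊢
  obtain ⟨s, hs, rfl⟩ : ∃ s : ℝ, 0 < s ∧ s ^ 2 = S :=
    ⟨Real.sqrt S, Real.sqrt_pos.2 hS, Real.sq_sqrt hS.le⟩
  rw [Real.sqrt_sq hs.le]
  -- Here `s = √(σA ^ 2 + σcov ^ 2)`; for `P > 0` the difference is exactly
  -- `log₂ (s / σA) - log₂ (1 + (s ^ 2 / h ^ 2) / P)`, whose last term vanishes in the limit.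
  have key : Tendsto (fun P : ℝ => Real.logb 2 (s / σA)
      - Real.logb 2 (1 + s ^ 2 / h ^ 2 / P)) atTop (nhds (Real.logb 2 (s / σA))) := by
    have h1 : Tendsto (fun P : ℝ => 1 + s ^ 2 / h ^ 2 / P) atTop (nhds 1) := by
      simpa using (tendsto_id.const_div_atTop (s ^ 2 / h ^ 2)).const_add (1 : ℝ)
    have h2 : Tendsto (fun P : ℝ => Real.logb 2 (1 + s ^ 2 / h ^ 2 / P)) atTop (nhds 0) := by
      simpa [Real.logb] using (h1.log one_ne_zero).div_const (Real.log 2)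
    simpa using h2.const_sub (Real.logb 2 (s / σA))
  refine key.congr' ?_
  filter_upwards [eventually_gt_atTop 0] with P hP
  rw [sub_eq_sub_iff_add_eq_add, ← Real.logb_mul (by positivity) (by positivity),
    ← Real.logb_mul (by positivity) (by positivity)]
  congr 1
  field_simp
  ring
end

section
/- Let h > 0, σ_A > 0, σ_cov > 0. Define G(P) = log₂( P h² / ( √(σ_A² + σ_cov²) · √(σ_A²) ) ) − log₂( 1 + P h² / (σ_A² + σ_cov²) ) and D(P) = log₂( 1 + P h² / (σ_A² + σ_cov²) ). Then lim_{P → ∞} G(P) / D(P) = 0. -/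
/-! The gain `G(P)` is the logarithm of the ratio `(P a) / (1 + P b)` with positive constants
`a = h² / (√(σA² + σcov²) √(σA²))` and `b = h² / (σA² + σcov²)`. This ratio converges to
`a / b > 0`, so `G(P)` converges to a finite limit, while `D(P) = log₂ (1 + P b)` tends to
infinity. Hence `G(P) / D(P) → 0`. -/

open Real Filter

/-- The difference of logarithms of two affine functions with positive slopes, the first one
homogeneous, converges to the logarithm of the ratio of the slopes. -/
lemma tendsto_logb_sub_logb {a b : ℝ} (ha : 0 < a) (hb : 0 < b) :
    Tendsto (fun P : ℝ => Real.logb 2 (P * a) - Real.logb 2 (1 + P * b))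
      atTop (nhds (Real.logb 2 (a / b))) := by
  have hratio : Tendsto (fun P : ℝ => a / (P⁻¹ + b)) atTop (nhds (a / b)) := by
    have hden : Tendsto (fun P : ℝ => P⁻¹ + b) atTop (nhds b) := by
      simpa using (tendsto_inv_atTop_zero (𝕜 := ℝ)).add_const b
    exact tendsto_const_nhds.div hden hb.ne'
  have hlog : Tendsto (fun P : ℝ => Real.logb 2 (a / (P⁻¹ + b))) atTop
      (nhds (Real.logb 2 (a / b))) :=
    (hratio.log (div_pos ha hb).ne').div_const (Real.log 2)
  refine hlog.congr' ?_
  filter_upwards [eventually_gt_atTop (0 : ℝ)] with P hP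
  rw [← Real.logb_div (by positivity) (by positivity)]
  congr 1
  field_simp

/-- The percentage mutual information gain of the splitting receiver vanishes
as `P → ∞` (Proposition 2): with `G(P)` the asymptotic gain over the coherent
receiver and `D(P)` the coherent receiver's mutual information,
`G(P)/D(P) → 0`. -/
theorem percentage_mi_gain_tendsto_zero (h σA σcov : ℝ)
    (hh : 0 < h) (hσA : 0 < σA) (hσcov : 0 < σcov) :
    Tendsto (fun P : ℝ =>
        (Real.logb 2 (P * h ^ 2 / (Real.sqrt (σA ^ 2 + σcov ^ 2) * Real.sqrt (σA ^ 2)))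
            - Real.logb 2 (1 + P * h ^ 2 / (σA ^ 2 + σcov ^ 2)))
          / Real.logb 2 (1 + P * h ^ 2 / (σA ^ 2 + σcov ^ 2)))
      atTop (nhds 0) := by
  have hG := tendsto_logb_sub_logb
    (a := h ^ 2 / (Real.sqrt (σA ^ 2 + σcov ^ 2) * Real.sqrt (σA ^ 2)))
    (b := h ^ 2 / (σA ^ 2 + σcov ^ 2)) (by positivity) (by positivity)
  have hD : Tendsto (fun P : ℝ => Real.logb 2 (1 + P * (h ^ 2 / (σA ^ 2 + σcov ^ 2))))
      atTop atTop :=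
    (Real.tendsto_logb_atTop one_lt_two).comp
      (tendsto_atTop_add_const_left _ _ (tendsto_id.atTop_mul_const (by positivity)))
  simpa only [mul_div_assoc] using hG.div_atTop hD
end

section
/- Let σ_A > 0, σ_cov > 0, σ_N > 0, ρ ∈ (0,1), h > 0, and fix reals X_r, X_i, T_{1r}, T_{1i}, T_2. Then the double Gaussian integral ∫_{ℝ} ∫_{ℝ} (1/√(2π σ_N²)) · exp( −( T_2 − 2h(1−ρ)(X_r w_r + X_i w_i) )² / (2σ_N²) ) · (1/(π σ_cov²)) · exp( −( (T_{1r} − √ρ · w_r)² + (T_{1i} − √ρ · w_i)² ) / σ_cov² ) · (1/(π σ_A²)) · exp( −(w_r² + w_i²)/σ_A² ) dw_i dw_r equals 1/√( 2π³ (ρσ_A² + σ_cov²) · B ) · exp( −( 2√ρ · σ_A² (ρ−1) h (X_r T_{1r} + X_i T_{1i}) + (ρσ_A² + σ_cov²) T_2 )² / ( 2(ρσ_A² + σ_cov²) · B ) ) · exp( −( T_{1r}² + T_{1i}² ) / (ρσ_A² + σ_cov²) ), where B = σ_cov² σ_N² + 2 σ_A² σ_cov² h² (X_r² + X_i²)(ρ−1)²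 + ρ σ_A² σ_N². -/
/-!
The product of the three Gaussian factors is a constant times the exponential of a quadratic
polynomial in `(wr, wi)` with negative definite quadratic part. Completing the square in one
variable at a time gives
`∫∫ exp (-(a x² + 2 b x y + d y²) + 2 e x + 2 f y + g)
  = π / √(a d - b²) * exp ((d e² - 2 b e f + a f²) / (a d - b²) + g)`.
With `S = ρ σA² + σcov²`, the determinant `a d - b²` of the quadratic form at hand equals
`S B / (σA² σcov² σN)²`, and what is left is an identity of rational functions in `√ρ` and the
other parameters.
-/

open MeasureTheory Real

theorem integral_exp_quadratic_real {a : ℝ} (ha : 0 < a) (b c : ℝ) :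
    ∫ x : ℝ, Real.exp (-(a * x ^ 2) + 2 * b * x + c)
      = Real.sqrt (π / a) * Real.exp (b ^ 2 / a + c) := by
  have h1 : ∀ x : ℝ, Real.exp (-(a * x ^ 2) + 2 * b * x + c)
      = Real.exp (-a * (x - b / a) ^ 2) * Real.exp (b ^ 2 / a + c) := by
    intro x
    rw [← Real.exp_add]
    congr 1
    field_simp
    ring
  simp_rw [h1]
  rw [integral_mul_const, integral_sub_right_eq_self (fun x : ℝ => Real.exp (-a * x ^ 2)),
    integral_gaussian]

theorem integral_exp_quadratic_real_two {a b d : ℝ} (hd : 0 < d) (hdet : 0 < a * d - b ^ 2)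
    (e f g : ℝ) :
    ∫ x : ℝ, ∫ y : ℝ,
        Real.exp (-(a * x ^ 2 + 2 * b * x * y + d * y ^ 2) + 2 * e * x + 2 * f * y + g)
      = π / Real.sqrt (a * d - b ^ 2)
        * Real.exp ((d * e ^ 2 - 2 * b * e * f + a * f ^ 2) / (a * d - b ^ 2) + g) := by
  have h1 : ∀ x : ℝ, ∫ y : ℝ,
        Real.exp (-(a * x ^ 2 + 2 * b * x * y + d * y ^ 2) + 2 * e * x + 2 * f * y + g)
      = Real.sqrt (π / d) * Real.exp (-((a * d - b ^ 2) / d * x ^ 2)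
          + 2 * ((d * e - b * f) / d) * x + (f ^ 2 / d + g)) := by
    intro x
    have h2 : ∀ y : ℝ,
        -(a * x ^ 2 + 2 * b * x * y + d * y ^ 2) + 2 * e * x + 2 * f * y + g
        = -(d * y ^ 2) + 2 * (f - b * x) * y + (-(a * x ^ 2) + 2 * e * x + g) := by
      intro y
      ring
    simp_rw [h2]
    rw [integral_exp_quadratic_real hd]
    congr 2
    field_simp
    ring
  simp_rw [h1]
  rw [integral_const_mul, integral_exp_quadratic_real (div_pos hdet hd), ← mul_assoc]
  congr 1
  · rw [← Real.sqrt_mul (by positivity)]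
    have h3 : π / d * (π / ((a * d - b ^ 2) / d)) = π ^ 2 / (a * d - b ^ 2) := by
      field_simp
    rw [h3, Real.sqrt_div (by positivity), Real.sqrt_sq pi_pos.le]
  · obtain ⟨D, hD⟩ : ∃ D : ℝ, D = a * d - b ^ 2 := ⟨_, rfl⟩
    rw [← hD] at hdet ⊢
    have ha : a = (D + b ^ 2) / d := by
      rw [hD]
      field_simp
      ring
    have hne := hdet.ne'
    rw [ha]
    congr 1
    field_simp
    ring

/-- Gaussian marginalization identity underlying the low-complexity detection
rule of the splitting receiver (Proposition 3): integrating the product of the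
power-detection branch Gaussian likelihood, the coherent branch Gaussian
likelihood and the antenna-noise Gaussian density over the antenna noise
components `(w_r, w_i)` yields the stated closed form, where
`B = σ_cov²σ_N² + 2σ_A²σ_cov²h²(X_r² + X_i²)(ρ−1)² + ρσ_A²σ_N²`. -/
theorem low_complexity_likelihood_closed_form
    (σA σcov σN ρ h Xr Xi T1r T1i T2 : ℝ)
    (hσA : 0 < σA) (hσcov : 0 < σcov) (hσN : 0 < σN)
    (hρ : ρ ∈ Set.Ioo (0 : ℝ) 1) (hh : 0 < h)
    (B : ℝ)
    (hB : B = σcov ^ 2 * σN ^ 2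
        + 2 * σA ^ 2 * σcov ^ 2 * h ^ 2 * (Xr ^ 2 + Xi ^ 2) * (ρ - 1) ^ 2
        + ρ * σA ^ 2 * σN ^ 2) :
    (∫ wr : ℝ, ∫ wi : ℝ,
        (1 / Real.sqrt (2 * π * σN ^ 2))
          * Real.exp (-(T2 - 2 * h * (1 - ρ) * (Xr * wr + Xi * wi)) ^ 2 / (2 * σN ^ 2))
          * ((1 / (π * σcov ^ 2))
            * Real.exp (-((T1r - Real.sqrt ρ * wr) ^ 2 + (T1i - Real.sqrt ρ * wi) ^ 2)
                / σcov ^ 2))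
          * ((1 / (π * σA ^ 2)) * Real.exp (-(wr ^ 2 + wi ^ 2) / σA ^ 2)))
      = (1 / Real.sqrt (2 * π ^ 3 * (ρ * σA ^ 2 + σcov ^ 2) * B))
          * Real.exp (-(2 * Real.sqrt ρ * σA ^ 2 * (ρ - 1) * h * (Xr * T1r + Xi * T1i)
                + (ρ * σA ^ 2 + σcov ^ 2) * T2) ^ 2
              / (2 * (ρ * σA ^ 2 + σcov ^ 2) * B))
          * Real.exp (-(T1r ^ 2 + T1i ^ 2) / (ρ * σA ^ 2 + σcov ^ 2)) := by
  obtain ⟨hρ0, hρ1⟩ := hρ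
  -- Replace `ρ` by `s ^ 2` so that the exponents are rational in the parameters.
  obtain ⟨s, hs, rfl⟩ : ∃ s : ℝ, 0 < s ∧ ρ = s ^ 2 :=
    ⟨Real.sqrt ρ, Real.sqrt_pos.2 hρ0, (Real.sq_sqrt hρ0.le).symm⟩
  rw [Real.sqrt_sq hs.le]
  have hBpos : 0 < B := by rw [hB]; positivity
  obtain ⟨S, hS⟩ : ∃ S : ℝ, S = s ^ 2 * σA ^ 2 + σcov ^ 2 := ⟨_, rfl⟩
  have hSpos : 0 < S := by rw [hS]; positivity
  rw [← hS]
  obtain ⟨k, hk⟩ : ∃ k : ℝ, k = 2 * h * (1 - s ^ 2) := ⟨_, rfl⟩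
  have hBk : B = S * σN ^ 2 + k ^ 2 * (Xr ^ 2 + Xi ^ 2) * σA ^ 2 * σcov ^ 2 / 2 := by
    rw [hB, hS, hk]; ring
  have hm : 2 * s * σA ^ 2 * (s ^ 2 - 1) * h * (Xr * T1r + Xi * T1i) + S * T2
      = S * T2 - k * s * σA ^ 2 * (Xr * T1r + Xi * T1i) := by
    rw [hk]; ring
  rw [hm]
  simp_rw [← hk]
  have hint : ∀ wr wi : ℝ,
      (1 / Real.sqrt (2 * π * σN ^ 2))
          * Real.exp (-(T2 - k * (Xr * wr + Xi * wi)) ^ 2 / (2 * σN ^ 2))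
          * ((1 / (π * σcov ^ 2))
            * Real.exp (-((T1r - s * wr) ^ 2 + (T1i - s * wi) ^ 2) / σcov ^ 2))
          * ((1 / (π * σA ^ 2)) * Real.exp (-(wr ^ 2 + wi ^ 2) / σA ^ 2))
      = (1 / Real.sqrt (2 * π * σN ^ 2) * (1 / (π * σcov ^ 2)) * (1 / (π * σA ^ 2)))
        * Real.exp (-((k ^ 2 * Xr ^ 2 / (2 * σN ^ 2) + S / (σA ^ 2 * σcov ^ 2)) * wr ^ 2
            + 2 * (k ^ 2 * Xr * Xi / (2 * σN ^ 2)) * wr * wi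
            + (k ^ 2 * Xi ^ 2 / (2 * σN ^ 2) + S / (σA ^ 2 * σcov ^ 2)) * wi ^ 2)
          + 2 * (k * T2 * Xr / (2 * σN ^ 2) + s * T1r / σcov ^ 2) * wr
          + 2 * (k * T2 * Xi / (2 * σN ^ 2) + s * T1i / σcov ^ 2) * wi
          + (-T2 ^ 2 / (2 * σN ^ 2) - (T1r ^ 2 + T1i ^ 2) / σcov ^ 2)) := by
    intro wr wi
    have hexp : ∀ c1 c2 c3 x y z : ℝ, c1 * Real.exp x * (c2 * Real.exp y) * (c3 * Real.exp z)
        = c1 * c2 * c3 * Real.exp (x + y + z) := by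
      intro c1 c2 c3 x y z
      rw [Real.exp_add, Real.exp_add]; ring
    rw [hexp]
    congr 2
    rw [hS]
    field_simp
    ring
  simp_rw [hint, integral_const_mul]
  have hdet : (k ^ 2 * Xr ^ 2 / (2 * σN ^ 2) + S / (σA ^ 2 * σcov ^ 2))
        * (k ^ 2 * Xi ^ 2 / (2 * σN ^ 2) + S / (σA ^ 2 * σcov ^ 2))
        - (k ^ 2 * Xr * Xi / (2 * σN ^ 2)) ^ 2
      = S * B / (σA ^ 2 * σcov ^ 2 * σN) ^ 2 := by
    rw [hBk]
    field_simp
    ring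
  rw [integral_exp_quadratic_real_two (by positivity) (by rw [hdet]; positivity), hdet,
    ← mul_assoc, mul_assoc (1 / Real.sqrt (2 * π ^ 3 * S * B)), ← Real.exp_add]
  congr 1
  · have h1 : Real.sqrt (2 * π ^ 3 * S * B) = π * Real.sqrt (2 * π) * Real.sqrt (S * B) := by
      rw [show 2 * π ^ 3 * S * B = π ^ 2 * (2 * π) * (S * B) by ring,
        Real.sqrt_mul (by positivity), Real.sqrt_mul (by positivity), Real.sqrt_sq pi_pos.le]
    rw [h1, Real.sqrt_div (by positivity), Real.sqrt_sq (by positivity),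
      Real.sqrt_mul (by positivity : 0 ≤ 2 * π), Real.sqrt_sq hσN.le]
    have h2 : 0 < Real.sqrt (2 * π) := by positivity
    have h3 : 0 < Real.sqrt (S * B) := by positivity
    field_simp
  · congr 1
    have hBne := hBpos.ne'
    field_simp
    -- Eliminating `B` and then `S` leaves a polynomial identity.
    rw [hBk, hS]
    ring
end
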